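/- Let R be a basic left Harada algebra with modules P_{ij} := rad^{j-1}(e_{i1}R) as below, and fix 1 ≤ i ≤ m, 1 ≤ j ≤ n_i and 1 ≤ k < l ≤ n_i. Then the natural projection φ : P_{ij} → P_{ij}/rad(P_{i n_i}) induces, by composition, an isomorphism Hom_R(P_{ij}/rad(P_{i n_i}), P_{ik}/P_{il}) → Hom_R(P_{ij}, P_{ik}/P_{il}). -/

import Mathlib

/-!
Common setup.  `K` is an algebraically closed field and `R` a finite-dimensional associative
unital `K`-algebra.  Right `R`-modules are formalized as modules over the opposite ring `Rᵐᵒᵖ`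
(so that `MulOpposite.op r • x = x * r`).
-/

open MulOpposite

/-- The right ideal `xR` of a ring `R`, as a submodule of `R` over `Rᵐᵒᵖ`. -/
def rightIdeal (R : Type) [Ring R] (x : R) : Submodule Rᵐᵒᵖ R :=
  Submodule.span Rᵐᵒᵖ {x}

/-- The Jacobson radical of a submodule `N` (the intersection of the maximal submodules of the
module `N`), viewed as a submodule of the ambient module.  Iterating this operation gives the
iterated radicals `rad^k`. -/
def radSub {A M : Type} [Ring A] [AddCommGroup M] [Module A M] (N : Submodule A M) :
    Submodule A M :=
  Submodule.map N.subtype (sInf {P : Submodule A ↥N | IsCoatom P})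

/-- A module is indecomposable if it is nonzero and admits no nontrivial direct sum
decomposition. -/
def IsIndecomposableMod (A M : Type) [Ring A] [AddCommGroup M] [Module A M] : Prop :=
  Nontrivial M ∧ ∀ N N' : Submodule A M, IsCompl N N' → N = ⊥ ∨ N' = ⊥

/-- A module has projective dimension at most one iff it admits a surjection from a projective
module with projective kernel. -/
def PdLeOne (A : Type) [Ring A] (M : Type) [AddCommGroup M] [Module A M] : Prop :=
  ∃ (P : ModuleCat.{0} A) (f : ↥P →ₗ[A] M),
    Module.Projective A ↥P ∧ Function.Surjective f ∧
      Module.Projective A ↥(LinearMap.ker f)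

/-- `Ext¹_A(M,N) = 0`, expressed by the splitting of every short exact sequence
`0 → N → E → M → 0`. -/
def Ext1Zero (A : Type) [Ring A] (M N : Type) [AddCommGroup M] [Module A M]
    [AddCommGroup N] [Module A N] : Prop :=
  ∀ (E : ModuleCat.{0} A) (i : N →ₗ[A] ↥E) (p : ↥E →ₗ[A] M),
    Function.Injective i → Function.Surjective p → LinearMap.range i = LinearMap.ker p →
    ∃ s : M →ₗ[A] ↥E, p.comp s = LinearMap.id

/-- `X ∈ add T` : `X` is a direct summand of a finite direct sum of copies of `T`. -/
def InAdd (A : Type) [Ring A] (T X : Type) [AddCommGroup T] [Module A T]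
    [AddCommGroup X] [Module A X] : Prop :=
  ∃ (k : ℕ) (f : X →ₗ[A] (Fin k → T)) (g : (Fin k → T) →ₗ[A] X),
    g.comp f = LinearMap.id

/-- `T` is a (finitely generated) tilting right `R`-module: projective dimension at most one,
no self-extensions, and there is a short exact sequence `0 → R → T₀ → T₁ → 0` with
`T₀, T₁ ∈ add T`. -/
def IsTiltingRight (R : Type) [Ring R] (T : Type) [AddCommGroup T] [Module Rᵐᵒᵖ T] : Prop :=
  Module.Finite Rᵐᵒᵖ T ∧ PdLeOne Rᵐᵒᵖ T ∧ Ext1Zero Rᵐᵒᵖ T T ∧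
    ∃ (T₀ T₁ : ModuleCat.{0} Rᵐᵒᵖ) (f : R →ₗ[Rᵐᵒᵖ] ↥T₀) (g : ↥T₀ →ₗ[Rᵐᵒᵖ] ↥T₁),
      InAdd Rᵐᵒᵖ T ↥T₀ ∧ InAdd Rᵐᵒᵖ T ↥T₁ ∧
        Function.Injective f ∧ Function.Surjective g ∧ LinearMap.range f = LinearMap.ker g

/-- `T` is basic: it is an (internal) direct sum of pairwise non-isomorphic indecomposable
submodules. -/
def IsBasicMod (A : Type) [Ring A] (T : Type) [AddCommGroup T] [Module A T] : Prop :=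
  ∃ (k : ℕ) (N : Fin k → Submodule A T),
    DirectSum.IsInternal N ∧ (∀ a, IsIndecomposableMod A ↥(N a)) ∧
      ∀ a b, a ≠ b → IsEmpty (↥(N a) ≃ₗ[A] ↥(N b))

/-- The setoid identifying isomorphic modules (among those with property `P`). -/
def isoSetoid (A : Type) [Ring A] (P : ModuleCat.{0} A → Prop) :
    Setoid {M : ModuleCat.{0} A // P M} where
  r M N := Nonempty (↥M.1 ≃ₗ[A] ↥N.1)
  iseqv := ⟨fun M => ⟨LinearEquiv.refl A ↥M.1⟩, fun ⟨e⟩ => ⟨e.symm⟩,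
    fun ⟨e⟩ ⟨f⟩ => ⟨e.trans f⟩⟩

/-- The data exhibiting a ring `R` as a basic left Harada algebra:
a complete set `{e i j}` of orthogonal primitive idempotents with pairwise non-isomorphic
right ideals `(e i j)R` (`R` is basic), such that each `(e i 0)R` is an injective right
module, and `(e i j)R ≅ rad ((e i (j-1))R)` for `j ≥ 1`.  (Indices are shifted by one from
the paper: the paper's `e_{ij}` is `e i (j-1)` here.) -/
structure HaradaData (R : Type) [Ring R] : Type where
  m : ℕ
  hm : 0 < m
  n : Fin m → ℕ
  hn : ∀ i, 0 < n i
  e : (i : Fin m) → Fin (n i) → R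
  idem : ∀ i j, IsIdempotentElem (e i j)
  orth : ∀ p q : Σ i : Fin m, Fin (n i), p ≠ q → e p.1 p.2 * e q.1 q.2 = 0
  sum_eq_one : ∑ p : Σ i : Fin m, Fin (n i), e p.1 p.2 = 1
  indec : ∀ i j, IsIndecomposableMod Rᵐᵒᵖ ↥(rightIdeal R (e i j))
  basic : ∀ p q : Σ i : Fin m, Fin (n i), p ≠ q →
    IsEmpty (↥(rightIdeal R (e p.1 p.2)) ≃ₗ[Rᵐᵒᵖ] ↥(rightIdeal R (e q.1 q.2)))
  inj : ∀ i, Module.Injective Rᵐᵒᵖ ↥(rightIdeal R (e i ⟨0, hn i⟩))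
  rad_iso : ∀ (i : Fin m) (j : Fin (n i)), 0 < j.val →
    Nonempty (↥(rightIdeal R (e i j)) ≃ₗ[Rᵐᵒᵖ]
      ↥(radSub (rightIdeal R (e i ⟨j.val - 1, Nat.lt_of_le_of_lt (Nat.sub_le j.val 1) j.isLt⟩))))

variable {R : Type} [Ring R]

/-- `H.P i j = rad^j ((e i 0)R)`; this is the paper's `P_{i,j+1} = rad^j (e_{i1}R)`,
a submodule of `R`. -/
def HaradaData.P (H : HaradaData R) (i : Fin H.m) (j : Fin (H.n i)) : Submodule Rᵐᵒᵖ R :=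
  radSub^[j.val] (rightIdeal R (H.e i ⟨0, H.hn i⟩))

/-- The quotient module `P_{ik}/P_{il}` (for `l ≥ k` we have `H.P i l ≤ H.P i k`). -/
abbrev HaradaData.Quot (H : HaradaData R) (i : Fin H.m) (k l : Fin (H.n i)) : Type :=
  ↥(H.P i k) ⧸ Submodule.comap (H.P i k).subtype (H.P i l)

/-- The last index (the paper's `n_i`) in `Fin (H.n i)`. -/
def HaradaData.last (H : HaradaData R) (i : Fin H.m) : Fin (H.n i) :=
  ⟨H.n i - 1, Nat.sub_lt (H.hn i) one_pos⟩

/-- The right ideal `I = ⊕_{i,j} rad^{n_i - j + 1}(e_{ij}R)` of the paper. -/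
def HaradaData.I (H : HaradaData R) : Submodule Rᵐᵒᵖ R :=
  ⨆ p : Σ i : Fin H.m, Fin (H.n i),
    radSub^[H.n p.1 - p.2.val] (rightIdeal R (H.e p.1 p.2))

/-- The submodule `T·I` of a right module `T`, for `I` a right ideal of `R`. -/
def smulSub (I : Submodule Rᵐᵒᵖ R) (T : Type) [AddCommGroup T] [Module Rᵐᵒᵖ T] :
    Submodule Rᵐᵒᵖ T :=
  Submodule.span Rᵐᵒᵖ {x : T | ∃ (t : T) (r : R), r ∈ I ∧ x = op r • t}

/-!
Write `n = n_i`. Each `P_{ij}` is an indecomposable projective module of finite length, so its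
endomorphism ring is local by Fitting's lemma, and hence all its proper submodules lie in its
radical. Consequently a submodule of `P_{i1}` is either one of the `P_{it}` or contained in
`rad(P_{in})`. Now let `f : P_{ij} → P_{ik}`. If the image of `f` is some `P_{it}`, then `f` splits
because `P_{it}` is projective, so `P_{ij} ≅ P_{it}` by indecomposability, `t = j`, and `f` maps
`rad(P_{in}) = rad^{n-j+1}(P_{ij})` into itself; otherwise the whole image of `f` lies in
`rad(P_{in})`. Either way `f` maps `rad(P_{in})` into `rad(P_{in}) ⊆ P_{il}`. As `P_{ij}` is
projective, every map `P_{ij} → P_{ik}/P_{il}` lifts to such an `f`, and therefore kills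
`rad(P_{in})`.
-/

section Projective

variable {A M N : Type*} [Ring A] [AddCommGroup M] [Module A M] [AddCommGroup N] [Module A N]
  [Module.Projective A M]

theorem bijective_comp_mkQ_of_forall_le_comap {X : Submodule A M} {Y : Submodule A N}
    (h : ∀ f : M →ₗ[A] N, X ≤ Y.comap f) :
    Function.Bijective fun g : (M ⧸ X) →ₗ[A] N ⧸ Y => g ∘ₗ X.mkQ := by
  refine ⟨fun g g' hg => (LinearMap.cancel_right X.mkQ_surjective).1 hg, fun f => ?_⟩
  obtain ⟨f', rfl⟩ := Module.projective_lifting_property Y.mkQ f Y.mkQ_surjective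
  exact ⟨X.mapQ Y f' (h f'), X.mapQ_mkQ Y f'⟩

theorem le_jacobson_of_isLocalRing_end [IsLocalRing (Module.End A M)] {X : Submodule A M}
    (hX : X ≠ ⊤) : X ≤ Module.jacobson A M := by
  refine le_sInf fun C hC => by_contra fun hXC => ?_
  have surjective : Function.Surjective (C.mkQ ∘ₗ X.subtype) := by
    rw [← LinearMap.range_eq_top, LinearMap.range_comp, X.range_subtype, Submodule.map_mkQ_eq_top]
    exact hC.2 _ (left_lt_sup.2 hXC)
  obtain ⟨g, hg⟩ := Module.projective_lifting_property _ C.mkQ surjective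
  let f : Module.End A M := X.subtype ∘ₗ g
  have one_sub_mem (x : M) : (1 - f) x ∈ C :=
    (Submodule.Quotient.eq C).1 (LinearMap.congr_fun hg x).symm
  rcases IsLocalRing.isUnit_or_isUnit_of_add_one (add_sub_cancel f 1) with hf | hf <;>
    have surj := ((Module.End.isUnit_iff _).1 hf).surjective
  · exact hX (eq_top_iff.2 fun y _ => (surj y).elim fun x hx => hx ▸ (g x).2)
  · exact hC.1 (eq_top_iff.2 fun y _ => (surj y).elim fun x hx => hx ▸ one_sub_mem x)

end Projective

section Radical

variable {A M N : Type} [Ring A] [AddCommGroup M] [Module A M] [AddCommGroup N] [Module A N]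

theorem radSub_le (X : Submodule A M) : radSub X ≤ X :=
  Submodule.map_subtype_le X (Module.jacobson A X)

theorem antitone_iterate_radSub (X : Submodule A M) : Antitone fun t : ℕ => radSub^[t] X :=
  antitone_nat_of_succ_le fun t => by
    rw [Function.iterate_succ_apply']
    exact radSub_le _

theorem nonempty_radSub_equiv {X : Submodule A M} {Y : Submodule A N} (e : X ≃ₗ[A] Y) :
    Nonempty (radSub X ≃ₗ[A] radSub Y) := by
  have map_jacobson : (Module.jacobson A X).map (e : X →ₗ[A] Y) = Module.jacobson A Y :=
    Module.map_jacobson_of_bijective e.bijective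
  let radSubEquiv {L : Type} [AddCommGroup L] [Module A L] (Z : Submodule A L) :
      Module.jacobson A Z ≃ₗ[A] radSub Z :=
    Submodule.equivMapOfInjective Z.subtype Z.injective_subtype _
  exact ⟨(radSubEquiv X).symm ≪≫ₗ e.ofSubmodules _ _ map_jacobson ≪≫ₗ radSubEquiv Y⟩

theorem map_mem_radSub {X : Submodule A M} {Y : Submodule A N} {f : X →ₗ[A] N}
    (hf : LinearMap.range f ≤ Y) {x : X} (hx : (x : M) ∈ radSub X) : f x ∈ radSub Y := by
  let g : X →ₗ[A] Y := f.codRestrict Y fun z => hf ⟨z, rfl⟩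
  obtain ⟨z, z_mem_jacobson, hzx⟩ := hx
  obtain rfl := X.injective_subtype hzx
  exact ⟨g z, Module.le_comap_jacobson g z_mem_jacobson, rfl⟩

theorem map_mem_iterate_radSub {X : Submodule A M} {Y : Submodule A N} {f : X →ₗ[A] N}
    (hf : LinearMap.range f ≤ Y) (t : ℕ) {x : X} (hx : (x : M) ∈ radSub^[t] X) :
    f x ∈ radSub^[t] Y := by
  induction t generalizing X Y with
  | zero => exact hf ⟨x, rfl⟩
  | succ t ih =>
    let g : radSub X →ₗ[A] N := f ∘ₗ Submodule.inclusion (radSub_le X)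
    have range_g_le : LinearMap.range g ≤ radSub Y := by
      rintro _ ⟨z, rfl⟩
      exact map_mem_radSub hf z.2
    have x_mem : (x : M) ∈ radSub X := antitone_iterate_radSub X (Nat.le_add_left 1 t) hx
    exact ih range_g_le (x := ⟨x, x_mem⟩) hx

theorem eq_iterate_radSub_or_le {X : Submodule A M} {n : ℕ}
    (hX : ∀ t < n, ∀ Y < radSub^[t] X, Y ≤ radSub (radSub^[t] X)) {Y : Submodule A M}
    (hY : Y ≤ X) : (∃ t < n, Y = radSub^[t] X) ∨ Y ≤ radSub^[n] X := by
  induction n with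
  | zero => exact Or.inr hY
  | succ n ih =>
    rcases ih fun t ht => hX t (Nat.lt_succ_of_lt ht) with ⟨t, ht, hYt⟩ | hYn
    · exact Or.inl ⟨t, Nat.lt_succ_of_lt ht, hYt⟩
    · rcases hYn.eq_or_lt with hYn | hYn
      · exact Or.inl ⟨n, Nat.lt_succ_self n, hYn⟩
      · rw [Function.iterate_succ_apply']
        exact Or.inr (hX n (Nat.lt_succ_self n) Y hYn)

end Radical

section Indecomposable

variable {A M N : Type} [Ring A] [AddCommGroup M] [Module A M] [AddCommGroup N] [Module A N]

theorem IsIndecomposableMod.of_equiv (e : M ≃ₗ[A] N) (h : IsIndecomposableMod A M) :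
    IsIndecomposableMod A N := by
  have := h.1
  let comapIso : Submodule A N ≃o Submodule A M := Submodule.orderIsoMapComap e.symm
  refine ⟨e.symm.toEquiv.nontrivial, fun X Y hXY => ?_⟩
  exact (h.2 _ _ (comapIso.isCompl hXY)).imp (map_eq_bot_iff comapIso).1
    (map_eq_bot_iff comapIso).1

theorem IsIndecomposableMod.isLocalRing_end [IsArtinian A M] [IsNoetherian A M]
    (h : IsIndecomposableMod A M) : IsLocalRing (Module.End A M) := by
  have := h.1
  refine .of_isUnit_or_isUnit_one_sub_self fun f => ?_
  obtain ⟨n, hn, n_ne_zero⟩ :=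
    (f.eventually_isCompl_ker_pow_range_pow.and (Filter.eventually_ne_atTop 0)).exists
  rcases h.2 _ _ hn with ker_eq_bot | range_eq_bot
  · left
    rw [← isUnit_pow_iff n_ne_zero, Module.End.isUnit_iff]
    exact IsArtinian.bijective_of_injective_endomorphism _ (LinearMap.ker_eq_bot.1 ker_eq_bot)
  · right
    exact IsNilpotent.isUnit_one_sub ⟨n, LinearMap.range_eq_bot.1 range_eq_bot⟩

theorem IsIndecomposableMod.bijective_of_surjective [Nontrivial N] [Module.Projective A N]
    (h : IsIndecomposableMod A M) {f : M →ₗ[A] N} (hf : Function.Surjective f) :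
    Function.Bijective f := by
  obtain ⟨g, hg⟩ := f.exists_rightInverse_of_surjective (LinearMap.range_eq_top.2 hf)
  have hfg (y : N) : f (g y) = y := LinearMap.congr_fun hg y
  have idempotent : IsIdempotentElem (g ∘ₗ f) := LinearMap.ext fun x => congrArg g (hfg (f x))
  rcases h.2 _ _ (LinearMap.IsIdempotentElem.isCompl idempotent) with range_eq_bot | ker_eq_bot
  · obtain ⟨y, hy⟩ := exists_ne (0 : N)
    have g_y_eq_zero : g y = 0 := by
      simpa [hfg] using LinearMap.congr_fun (LinearMap.range_eq_bot.1 range_eq_bot) (g y)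
    exact absurd (by rw [← hfg y, g_y_eq_zero, map_zero]) hy
  · exact ⟨.of_comp (LinearMap.ker_eq_bot.1 ker_eq_bot), hf⟩

theorem le_radSub_of_lt {X Y : Submodule A M} [Module.Projective A X]
    [IsLocalRing (Module.End A X)] (hYX : Y < X) : Y ≤ radSub X := by
  have comap_ne_top : Y.comap X.subtype ≠ ⊤ := by
    rw [Ne, Submodule.comap_subtype_eq_top]
    exact hYX.not_ge
  intro y hy
  exact ⟨⟨y, hYX.le hy⟩, le_jacobson_of_isLocalRing_end comap_ne_top hy, rfl⟩

end Indecomposable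

theorem projective_rightIdeal {e : R} (he : IsIdempotentElem e) :
    Module.Projective Rᵐᵒᵖ (rightIdeal R e) := by
  have : Module.Projective Rᵐᵒᵖ R := .of_equiv (opLinearEquiv Rᵐᵒᵖ (M := R)).symm
  refine .of_split (rightIdeal R e).subtype ((LinearMap.mulLeft Rᵐᵒᵖ e).codRestrict _ fun x =>
    Submodule.mem_span_singleton.2 ⟨op x, rfl⟩) ?_
  ext ⟨x, hx⟩
  obtain ⟨r, rfl⟩ := Submodule.mem_span_singleton.1 hx
  exact (mul_smul_comm r e e).trans (congrArg (r • ·) he.eq)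

namespace HaradaData

variable (H : HaradaData R) (i : Fin H.m)

theorem P_succ {t : ℕ} (ht : t + 1 < H.n i) :
    H.P i ⟨t + 1, ht⟩ = radSub (H.P i ⟨t, Nat.lt_of_succ_lt ht⟩) :=
  Function.iterate_succ_apply' radSub t _

theorem iterate_radSub_P (j : Fin (H.n i)) :
    radSub^[H.n i - j] (H.P i j) = radSub (H.P i (H.last i)) := by
  have exponent : H.n i - j + j = (H.n i - 1) + 1 := by omega
  rw [P, P, last, ← Function.iterate_add_apply, exponent, Function.iterate_succ_apply']

theorem radSub_P_last_le (l : Fin (H.n i)) : radSub (H.P i (H.last i)) ≤ H.P i l := by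
  rw [← H.iterate_radSub_P i l]
  exact antitone_iterate_radSub _ (Nat.zero_le _)

theorem nonempty_rightIdeal_equiv_P (j : Fin (H.n i)) :
    Nonempty (rightIdeal R (H.e i j) ≃ₗ[Rᵐᵒᵖ] H.P i j) := by
  obtain ⟨t, ht⟩ := j
  induction t with
  | zero => exact ⟨LinearEquiv.refl _ _⟩
  | succ t ih =>
    obtain ⟨e⟩ := ih (Nat.lt_of_succ_lt ht)
    obtain ⟨radEquiv⟩ := nonempty_radSub_equiv e
    obtain ⟨haradaEquiv⟩ := H.rad_iso i ⟨t + 1, ht⟩ (Nat.succ_pos t)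
    rw [P_succ]
    exact ⟨haradaEquiv ≪≫ₗ radEquiv⟩

instance projective_P (j : Fin (H.n i)) : Module.Projective Rᵐᵒᵖ (H.P i j) := by
  obtain ⟨e⟩ := H.nonempty_rightIdeal_equiv_P i j
  have := projective_rightIdeal (H.idem i j)
  exact .of_equiv e

theorem isIndecomposableMod_P (j : Fin (H.n i)) : IsIndecomposableMod Rᵐᵒᵖ (H.P i j) := by
  obtain ⟨e⟩ := H.nonempty_rightIdeal_equiv_P i j
  exact (H.indec i j).of_equiv e

variable {i}

theorem eq_of_P_equiv {j k : Fin (H.n i)} (e : H.P i j ≃ₗ[Rᵐᵒᵖ] H.P i k) : j = k := by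
  obtain ⟨e_j⟩ := H.nonempty_rightIdeal_equiv_P i j
  obtain ⟨e_k⟩ := H.nonempty_rightIdeal_equiv_P i k
  by_contra hjk
  exact (H.basic ⟨i, j⟩ ⟨i, k⟩ (by simpa using hjk)).false (e_j ≪≫ₗ e ≪≫ₗ e_k.symm)

theorem eq_of_range_eq_P {j t : Fin (H.n i)} {f : H.P i j →ₗ[Rᵐᵒᵖ] R}
    (hf : LinearMap.range f = H.P i t) : j = t := by
  have : Module.Projective Rᵐᵒᵖ (LinearMap.range f) := hf ▸ H.projective_P i t
  have : Nontrivial (LinearMap.range f) := hf ▸ (H.isIndecomposableMod_P i t).1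
  have bijective : Function.Bijective f.rangeRestrict :=
    (H.isIndecomposableMod_P i j).bijective_of_surjective f.surjective_rangeRestrict
  exact H.eq_of_P_equiv (.ofBijective _ bijective ≪≫ₗ .ofEq _ _ hf)

section Artinian

variable [IsArtinianRing Rᵐᵒᵖ]

theorem le_radSub_P_of_lt {t : Fin (H.n i)} {Y : Submodule Rᵐᵒᵖ R} (hY : Y < H.P i t) :
    Y ≤ radSub (H.P i t) := by
  have : Module.Finite Rᵐᵒᵖ R := .equiv (opLinearEquiv Rᵐᵒᵖ (M := R)).symm
  have := (H.isIndecomposableMod_P i t).isLocalRing_end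
  exact le_radSub_of_lt hY

theorem eq_P_or_le_radSub_P_last {Y : Submodule Rᵐᵒᵖ R} (hY : Y ≤ H.P i ⟨0, H.hn i⟩) :
    (∃ t, Y = H.P i t) ∨ Y ≤ radSub (H.P i (H.last i)) := by
  rw [← H.iterate_radSub_P i ⟨0, H.hn i⟩]
  refine (eq_iterate_radSub_or_le (fun t ht Z hZ => ?_) hY).imp_left ?_
  · exact H.le_radSub_P_of_lt (t := ⟨t, ht⟩) hZ
  · rintro ⟨t, ht, rfl⟩
    exact ⟨⟨t, ht⟩, rfl⟩

theorem map_mem_radSub_P_last {j : Fin (H.n i)} {f : H.P i j →ₗ[Rᵐᵒᵖ] R}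
    (hf : LinearMap.range f ≤ H.P i ⟨0, H.hn i⟩) {x : H.P i j}
    (hx : (x : R) ∈ radSub (H.P i (H.last i))) : f x ∈ radSub (H.P i (H.last i)) := by
  rcases H.eq_P_or_le_radSub_P_last hf with ⟨t, range_eq⟩ | range_le
  · obtain rfl := H.eq_of_range_eq_P range_eq
    rw [← H.iterate_radSub_P i j] at hx ⊢
    exact map_mem_iterate_radSub range_eq.le _ hx
  · exact range_le ⟨x, rfl⟩

end Artinian

end HaradaData

theorem statement14_general [IsArtinianRing Rᵐᵒᵖ] (H : HaradaData R) (i : Fin H.m)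
    (j k l : Fin (H.n i)) :
    Function.Bijective
      (fun g : (↥(H.P i j) ⧸ Submodule.comap (H.P i j).subtype
          (radSub (H.P i (H.last i)))) →ₗ[Rᵐᵒᵖ] H.Quot i k l =>
        g.comp (Submodule.comap (H.P i j).subtype (radSub (H.P i (H.last i)))).mkQ) := by
  refine bijective_comp_mkQ_of_forall_le_comap fun f x hx => ?_
  have range_le : LinearMap.range ((H.P i k).subtype ∘ₗ f) ≤ H.P i ⟨0, H.hn i⟩ := by
    rintro _ ⟨y, rfl⟩
    exact antitone_iterate_radSub _ (Nat.zero_le k) (f y).2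
  exact H.radSub_P_last_le i l (H.map_mem_radSub_P_last range_le hx)

/-- Lemma 4.3.  The natural projection
`φ : P_{ij} → P_{ij}/rad(P_{i n_i})` induces, by composition, an isomorphism
`Hom_R(P_{ij}/rad(P_{i n_i}), P_{ik}/P_{il}) → Hom_R(P_{ij}, P_{ik}/P_{il})`. -/
theorem statement14 (K R : Type) [Field K] [IsAlgClosed K] [Ring R] [Algebra K R]
    [FiniteDimensional K R] (H : HaradaData R) (i : Fin H.m) (j k l : Fin (H.n i))
    (hkl : k < l) :
    Function.Bijective
      (fun g : (↥(H.P i j) ⧸ Submodule.comap (H.P i j).subtype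
          (radSub (H.P i (H.last i)))) →ₗ[Rᵐᵒᵖ] H.Quot i k l =>
        g.comp (Submodule.comap (H.P i j).subtype (radSub (H.P i (H.last i)))).mkQ) := by
  have : IsArtinianRing Rᵐᵒᵖ := .of_finite K Rᵐᵒᵖ
  exact statement14_general H i j k l
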